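/- Let α = e_1 + e_i with 1 < i ≤ n, and set a(α) := {e_i} ∪ {e_i + e_s : i < s ≤ n} ∪ {e_i − e_s : i < s ≤ n} ∪ {e_1 − e_s : 1 < s < i}, ℓ(α) := {e_1} ∪ {e_1 + e_s : i < s ≤ n} ∪ {e_1 − e_s : i < s ≤ n} ∪ {e_s + e_i : 1 < s < i}, and s(α) := Φ⁺ ∖ a(α). Then: (a) s(α) is a closed pattern; (b) ℓ(α) ∪ k(α) is normal in s(α); and (c) ℓ(α) ∪ {α} ∪ k(α) is a normal pattern in Φ⁺. -/

import Mathlib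

/-!
For a weight `w : Fin n → ℝ` the pairing `w ⬝ᵥ v` is linear in `v`, and it is nonnegative on the
positive roots of type `B_n` as soon as `w` is nonnegative and antitone. Write
`Q` for the pairing with the indicator of `{t | t < i}` and `P_j` for the one with the indicator
of `{t | t ≤ j}`. The proof describes every set involved by such pairings.

* A root `v` lies in the arm iff `Q v = 0` and one of `v i₀`, `v i` is at least `1`
  (`mem_armB_iff`). If `u + v` satisfies this, then `Q u = Q v = 0` by nonnegativity, and `u` or
  `v` has a positive coordinate at `i₀` or `i`; hence the source is closed.
* `k(α)` is a normal pattern not containing `α` (`kSet_normal`, `self_notMem_kSet`), and it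
  contains every root with `Q ≥ 2` (`mem_kSet_of_two_le`, by descending induction on height).
* The roots with `P_{i₀} ≥ 1` and `P_i ≥ 1`, or with `P_i ≥ 2`, lie in `ℓ(α) ∪ {α} ∪ k(α)`, and
  all of `ℓ(α) ∪ {α}` is among them. This condition persists under adding positive roots, which
  gives normality in the whole of `Φ⁺`.
* For normality in the source it remains to exclude `a + b = α` with `a` in the source. If
  `b ∈ k(α)`, this contradicts normality of `k(α)`; if `b ∈ ℓ(α)`, then `Q b = 1 = Q α`, so
  `Q a = 0`, and one of `b i₀`, `b i` vanishes, so `a` has coordinate `1` there and lies in the arm.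
-/

/-!
Combinatorics of closed patterns in the set of positive roots of a finite
reduced irreducible crystallographic root system with a fixed base, following
"On the characters of the Sylow p-subgroups of untwisted Chevalley groups".
-/

namespace RSP

variable {V : Type*} [AddCommGroup V]

/-- `S` is a closed pattern (relative to the ambient set `Φ` of positive
roots): for all `a, b ∈ S` with `a + b ∈ Φ` one has `a + b ∈ S`. -/
def ClosedIn (Φ S : Set V) : Prop :=
  ∀ a ∈ S, ∀ b ∈ S, a + b ∈ Φ → a + b ∈ S

/-- `N` is a normal pattern in `Φ`: `N ⊆ Φ` and for all `a ∈ Φ`, `b ∈ N`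
with `a + b ∈ Φ` one has `a + b ∈ N`. -/
def NormalPattern (Φ N : Set V) : Prop :=
  N ⊆ Φ ∧ ∀ a ∈ Φ, ∀ b ∈ N, a + b ∈ Φ → a + b ∈ N

/-- `N` is normal in `S` (relative to `Φ`): for all `a ∈ S`, `b ∈ N` with
`a + b ∈ Φ` one has `a + b ∈ N`. -/
def NormalIn (Φ S N : Set V) : Prop :=
  ∀ a ∈ S, ∀ b ∈ N, a + b ∈ Φ → a + b ∈ N

/-- `rz(N) = {β ∈ Φ⁺ ∖ N : ∀ γ ∈ Φ⁺, β + γ ∉ Φ⁺ or β + γ ∈ N}`. -/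
def rzSet (Φ N : Set V) : Set V :=
  {b | b ∈ Φ \ N ∧ ∀ c ∈ Φ, b + c ∉ Φ ∨ b + c ∈ N}

/-- `a ≺ b` iff `b - a` is a sum of one or more elements of `Φ`. -/
def prec (Φ : Set V) (a b : V) : Prop :=
  ∃ m : Multiset V, m ≠ 0 ∧ (∀ v ∈ m, v ∈ Φ) ∧ b = a + m.sum

/-- `a ≼ b` iff `a ≺ b` or `a = b`. -/
def preceq (Φ : Set V) (a b : V) : Prop := prec Φ a b ∨ a = b

/-- The hook `h(a) = {γ ∈ Φ⁺ : a - γ ∈ Φ⁺ ∪ {0}}`. -/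
def hook (Φ : Set V) (a : V) : Set V :=
  {c | c ∈ Φ ∧ (a - c ∈ Φ ∨ a - c = 0)}

/-- `n₀(a) = {a}` and `n_{i+1}(a) = {b + c : b ∈ n_i(a), c ∈ Φ⁺} ∩ Φ⁺`. -/
def nIter (Φ : Set V) (a : V) : ℕ → Set V
  | 0 => {a}
  | i + 1 => {x | x ∈ Φ ∧ ∃ b ∈ nIter Φ a i, ∃ c ∈ Φ, x = b + c}

/-- `n(a) = ⋃_{i ≥ 1} n_i(a)`. -/
def nSet (Φ : Set V) (a : V) : Set V := ⋃ i : ℕ, nIter Φ a (i + 1)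

/-- `k₀(a) = n(a)` and `k_{i+1}(a) = (rz(k_i(a)) ∖ {a}) ∪ k_i(a)`. -/
def kIter (Φ : Set V) (a : V) : ℕ → Set V
  | 0 => nSet Φ a
  | i + 1 => (rzSet Φ (kIter Φ a i) \ {a}) ∪ kIter Φ a i

/-- `k(a) = ⋃_{i ≥ 0} k_i(a)`. -/
def kSet (Φ : Set V) (a : V) : Set V := ⋃ i : ℕ, kIter Φ a i

/-- `w₀(a) = {a}` and `w_{i+1}(a) = ⋃_{b ∈ w_i(a)} h(b)`. -/
def wIter (Φ : Set V) (a : V) : ℕ → Set V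
  | 0 => {a}
  | i + 1 => ⋃ b ∈ wIter Φ a i, hook Φ b

/-- `w(a) = ⋃_{i ≥ 0} w_i(a)`. -/
def wSet (Φ : Set V) (a : V) : Set V := ⋃ i : ℕ, wIter Φ a i

/-- The closed pattern generated by `M`: the intersection of all closed
patterns containing `M`. -/
def genPattern (Φ M : Set V) : Set V :=
  ⋂₀ {S : Set V | M ⊆ S ∧ S ⊆ Φ ∧ ClosedIn Φ S}

/-- The normal closure of `M` in a closed pattern `S`: the intersection of all
closed patterns `N` with `M ⊆ N ⊆ S` and `N ⊴ S`. -/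
def normalClosure (Φ S M : Set V) : Set V :=
  ⋂₀ {N : Set V | M ⊆ N ∧ N ⊆ S ∧ ClosedIn Φ N ∧ NormalIn Φ S N}

end RSP

open RSP

/-- The standard basis vector `e_i` of `ℝⁿ`. -/
def eB (n : ℕ) (i : Fin n) : Fin n → ℝ := Pi.single i 1

/-- The positive roots of type `B_n`:
`{e_i - e_j, e_i + e_j : i < j} ∪ {e_i}`. -/
def posB (n : ℕ) : Set (Fin n → ℝ) :=
  {v | ∃ i j : Fin n, i < j ∧ (v = eB n i - eB n j ∨ v = eB n i + eB n j)} ∪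
    {v | ∃ i : Fin n, v = eB n i}

/-- The arm `a(α)` of the hook of `α = e_1 + e_i` in type `B_n`:
`{e_i} ∪ {e_i ± e_s : i < s ≤ n} ∪ {e_1 - e_s : 1 < s < i}`. -/
def armB (n : ℕ) (i0 i : Fin n) : Set (Fin n → ℝ) :=
  ({eB n i} : Set (Fin n → ℝ)) ∪
    {v | ∃ s : Fin n, i < s ∧ v = eB n i + eB n s} ∪
    {v | ∃ s : Fin n, i < s ∧ v = eB n i - eB n s} ∪
    {v | ∃ s : Fin n, i0 < s ∧ s < i ∧ v = eB n i0 - eB n s}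

/-- The leg `ℓ(α)` of the hook of `α = e_1 + e_i` in type `B_n`:
`{e_1} ∪ {e_1 ± e_s : i < s ≤ n} ∪ {e_s + e_i : 1 < s < i}`. -/
def legB (n : ℕ) (i0 i : Fin n) : Set (Fin n → ℝ) :=
  ({eB n i0} : Set (Fin n → ℝ)) ∪
    {v | ∃ s : Fin n, i < s ∧ v = eB n i0 + eB n s} ∪
    {v | ∃ s : Fin n, i < s ∧ v = eB n i0 - eB n s} ∪
    {v | ∃ s : Fin n, i0 < s ∧ s < i ∧ v = eB n s + eB n i}

/-- The source `s(α) = Φ⁺ ∖ a(α)` in type `B_n`. -/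
def srcB (n : ℕ) (i0 i : Fin n) : Set (Fin n → ℝ) :=
  posB n \ armB n i0 i

/-! ### The sets `k(α)` for an arbitrary set of roots -/

section KSet

variable {V : Type*} [AddCommGroup V] {Φ : Set V} {a : V}

lemma kIter_subset (m : ℕ) : kIter Φ a m ⊆ Φ := by
  induction m with
  | zero =>
    intro x hx
    obtain ⟨j, hj⟩ := Set.mem_iUnion.1 hx
    exact hj.1
  | succ m ih =>
    rintro x (hx | hx)
    · exact hx.1.1.1
    · exact ih hx

lemma kSet_subset : kSet Φ a ⊆ Φ := Set.iUnion_subset kIter_subset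

lemma kIter_subset_kSet (m : ℕ) : kIter Φ a m ⊆ kSet Φ a :=
  Set.subset_iUnion (kIter Φ a) m

lemma kIter_normal (m : ℕ) :
    ∀ c ∈ Φ, ∀ b ∈ kIter Φ a m, c + b ∈ Φ → c + b ∈ kIter Φ a m := by
  induction m with
  | zero =>
    intro c hc b hb hcb
    obtain ⟨j, hj⟩ := Set.mem_iUnion.1 hb
    exact Set.mem_iUnion.2 ⟨j + 1, hcb, b, hj, c, hc, add_comm c b⟩
  | succ m ih =>
    rintro c hc b (hb | hb) hcb
    · right
      rw [add_comm] at hcb ⊢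
      exact (hb.1.2 c hc).resolve_left (not_not_intro hcb)
    · exact Or.inr (ih c hc b hb hcb)

lemma kSet_normal : ∀ c ∈ Φ, ∀ b ∈ kSet Φ a, c + b ∈ Φ → c + b ∈ kSet Φ a := by
  intro c hc b hb hcb
  obtain ⟨m, hm⟩ := Set.mem_iUnion.1 hb
  exact kIter_subset_kSet m (kIter_normal m c hc b hm hcb)

/-- If some additive functional is positive on all of `Φ`, then `a ∉ k(a)`: every element of
`n(a)` has a larger value than `a`, and the later steps of the construction remove `a`. -/
lemma self_notMem_kSet (f : V → ℝ) (hf : ∀ x y, f (x + y) = f x + f y)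
    (hpos : ∀ x ∈ Φ, 0 < f x) : a ∉ kSet Φ a := by
  have hle : ∀ j, ∀ x ∈ nIter Φ a j, f a ≤ f x := by
    intro j
    induction j with
    | zero => rintro x rfl; exact le_rfl
    | succ j ih =>
      rintro x ⟨-, b, hb, c, hc, rfl⟩
      rw [hf]
      linarith [ih b hb, hpos c hc]
  intro h
  obtain ⟨m, hm⟩ := Set.mem_iUnion.1 h
  induction m with
  | zero =>
    obtain ⟨j, -, b, hb, c, hc, hbc⟩ := Set.mem_iUnion.1 hm
    have h1 := hf b c
    rw [← hbc] at h1
    linarith [hle j b hb, hpos c hc]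
  | succ m ih => exact hm.elim (fun h' => h'.2 rfl) ih

end KSet

/-! ### Pairings of weights with roots of type `B_n` -/

section TypeB

variable {n : ℕ}

lemma dot_eB (w : Fin n → ℝ) (a : Fin n) : w ⬝ᵥ eB n a = w a := by
  simp [eB]

lemma eB_apply (a b : Fin n) : eB n a b = if b = a then 1 else 0 := by
  simp [eB, Pi.single_apply]

lemma dot_nonneg {w : Fin n → ℝ} (hw : Antitone w) (h0 : ∀ t, 0 ≤ w t) {v : Fin n → ℝ}
    (hv : v ∈ posB n) : 0 ≤ w ⬝ᵥ v := by
  rcases hv with ⟨a, b, hab, rfl | rfl⟩ | ⟨a, rfl⟩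
  · simpa [dotProduct_sub, dot_eB] using hw hab.le
  · simpa [dotProduct_add, dot_eB] using add_nonneg (h0 a) (h0 b)
  · simpa [dot_eB] using h0 a

/-- The indicator of the coordinates before `i`. -/
def indLT (i : Fin n) : Fin n → ℝ := fun t => if t < i then 1 else 0

/-- The indicator of the coordinates up to and including `i`. -/
def indLE (i : Fin n) : Fin n → ℝ := fun t => if t ≤ i then 1 else 0

/-- The weight whose pairing with a root is its height: `e_a` (with `a` counted from `0`)
has height `n - a`. -/
def htW (n : ℕ) : Fin n → ℝ := fun t => n - (t : ℕ)

lemma indLT_nonneg (i : Fin n) {v : Fin n → ℝ} (hv : v ∈ posB n) : 0 ≤ indLT i ⬝ᵥ v := by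
  refine dot_nonneg (fun a b hab => ?_) (fun t => ?_) hv
  · simp only [indLT]
    split_ifs <;> first | (exfalso; order) | norm_num
  · simp only [indLT]
    split_ifs <;> norm_num

lemma indLE_nonneg (i : Fin n) {v : Fin n → ℝ} (hv : v ∈ posB n) : 0 ≤ indLE i ⬝ᵥ v := by
  refine dot_nonneg (fun a b hab => ?_) (fun t => ?_) hv
  · simp only [indLE]
    split_ifs <;> first | (exfalso; order) | norm_num
  · simp only [indLE]
    split_ifs <;> norm_num

lemma htW_pos {v : Fin n → ℝ} (hv : v ∈ posB n) : 0 < htW n ⬝ᵥ v := by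
  have hlt (a : Fin n) : ((a : ℕ) : ℝ) < n := by exact_mod_cast a.2
  rcases hv with ⟨a, b, hab, rfl | rfl⟩ | ⟨a, rfl⟩
  · have : ((a : ℕ) : ℝ) < (b : ℕ) := by exact_mod_cast hab
    simp only [dotProduct_sub, dot_eB, htW]
    linarith
  · simp only [dotProduct_add, dot_eB, htW]
    linarith [hlt a, hlt b]
  · simp only [dot_eB, htW]
    linarith [hlt a]

lemma exists_of_two_le {i : Fin n} {v : Fin n → ℝ} (hv : v ∈ posB n)
    (h : 2 ≤ indLT i ⬝ᵥ v) : ∃ a b : Fin n, a < b ∧ b < i ∧ v = eB n a + eB n b := by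
  rcases hv with ⟨a, b, hab, rfl | rfl⟩ | ⟨a, rfl⟩
  · simp only [dotProduct_sub, dot_eB, indLT] at h
    split_ifs at h <;> norm_num at h
  · refine ⟨a, b, hab, ?_, rfl⟩
    simp only [dotProduct_add, dot_eB, indLT] at h
    split_ifs at h <;> first | assumption | norm_num at h
  · simp only [dot_eB, indLT] at h
    split_ifs at h; all_goals norm_num at h

/-! ### The arm, the leg and `k(α)` for `α = e_1 + e_i` -/

/-- The roots pairing to at least `2` with the indicator of `{t | t < i}` are the `e_a + e_b` with
`a < b < i`, and they lie in `k(α)`. Adding a positive root to `e_a + e_b`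
yields a root of the same shape with a smaller index sum, so the root enters the iteration
at the step governed by `a + b`. -/
lemma mem_kSet_of_two_le {i0 i : Fin n} (hi : i0 < i) {v : Fin n → ℝ} (hv : v ∈ posB n)
    (h : 2 ≤ indLT i ⬝ᵥ v) : v ∈ kSet (posB n) (eB n i0 + eB n i) := by
  have key : ∀ m : ℕ, ∀ a b : Fin n, a < b → b < i → (a : ℕ) + b < m →
      eB n a + eB n b ∈ kIter (posB n) (eB n i0 + eB n i) m := by
    intro m
    induction m with
    | zero => intro a b _ _ h; omega
    | succ m ih =>
      intro a b hab hb hm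
      have hQ : indLT i ⬝ᵥ (eB n a + eB n b) = 2 := by
        simp only [dotProduct_add, dot_eB, indLT, if_pos hb, if_pos (hab.trans hb)]
        norm_num
      by_cases hmem : eB n a + eB n b ∈ kIter (posB n) (eB n i0 + eB n i) m
      · exact Or.inr hmem
      · refine Or.inl ⟨⟨⟨Or.inl ⟨a, b, hab, Or.inr rfl⟩, hmem⟩, fun c hc => ?_⟩, ?_⟩
        · refine or_iff_not_imp_left.2 fun hs => ?_
          rw [not_not] at hs
          obtain ⟨a', b', hab', hb', he⟩ := exists_of_two_le (i := i) hs (by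
            rw [dotProduct_add, hQ]; linarith [indLT_nonneg i hc])
          rw [he]
          refine ih a' b' hab' hb' ?_
          have h1 := htW_pos hc
          have h2 : htW n ⬝ᵥ (eB n a + eB n b + c) = htW n ⬝ᵥ (eB n a' + eB n b') := by rw [he]
          simp only [dotProduct_add, dot_eB, htW] at h2
          have h3 : ((a' : ℕ) : ℝ) + (b' : ℕ) < (a : ℕ) + (b : ℕ) := by linarith
          have h4 : (a' : ℕ) + (b' : ℕ) < (a : ℕ) + (b : ℕ) := by exact_mod_cast h3
          omega
        · intro he
          rw [Set.mem_singleton_iff] at he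
          rw [he] at hQ
          simp [dotProduct_add, dot_eB, indLT, hi] at hQ
  obtain ⟨a, b, hab, hb, rfl⟩ := exists_of_two_le hv h
  exact kIter_subset_kSet _ (key _ a b hab hb (Nat.lt_succ_self _))

lemma mem_armB_iff {i0 i : Fin n} (hi : i0 < i) {v : Fin n → ℝ}
    (hv : v ∈ posB n) :
    v ∈ armB n i0 i ↔ indLT i ⬝ᵥ v = 0 ∧ (1 ≤ v i0 ∨ 1 ≤ v i) := by
  constructor
  · rintro (((rfl | ⟨s, hs, rfl⟩) | ⟨s, hs, rfl⟩) | ⟨s, hs, hsi, rfl⟩)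
    · simp [dot_eB, indLT, eB_apply]
    · simp [dotProduct_add, dot_eB, indLT, eB_apply, hs.le, hs.ne]
    · simp [dotProduct_sub, dot_eB, indLT, eB_apply, hs.le, hs.ne]
    · simp [dotProduct_sub, dot_eB, indLT, eB_apply, hi, hsi, hs.ne]
  · rintro ⟨hQ, h⟩
    rcases hv with ⟨a, b, hab, rfl | rfl⟩ | ⟨a, rfl⟩
    · simp only [dotProduct_sub, dot_eB, indLT, Pi.sub_apply, eB_apply] at hQ h
      by_cases hb : b < i
      · rcases h with h | h
        · have ha : i0 = a := by
            by_contra hne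
            rw [if_neg hne] at h
            split_ifs at h <;> norm_num at h
          subst ha
          exact Or.inr ⟨b, hab, hb, rfl⟩
        · rw [if_neg (hab.trans hb).ne', if_neg hb.ne'] at h
          norm_num at h
      · have hai : ¬ a < i := fun ha => by simp [ha, hb] at hQ
        have ha : i = a := by
          rcases h with h | h
          · rw [if_neg (by order)] at h
            split_ifs at h <;> norm_num at h
          · by_contra hne
            rw [if_neg hne] at h
            split_ifs at h <;> norm_num at h
        subst ha
        exact Or.inl (Or.inr ⟨b, hab, rfl⟩)
    · simp only [dotProduct_add, dot_eB, indLT, Pi.add_apply, eB_apply] at hQ h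
      have hai : ¬ a < i := fun ha => by
        rw [if_pos ha] at hQ
        split_ifs at hQ <;> norm_num at hQ
      have ha : i = a := by
        rcases h with h | h
        · rw [if_neg (by order), if_neg (by order)] at h
          norm_num at h
        · by_contra hne
          rw [if_neg hne, if_neg (by order)] at h
          norm_num at h
      subst ha
      exact Or.inl (Or.inl (Or.inr ⟨b, hab, rfl⟩))
    · simp only [dot_eB, indLT, eB_apply] at hQ h
      have hai : ¬ a < i := fun ha => by simp [ha] at hQ
      have ha : i = a := by
        rcases h with h | h
        · rw [if_neg (by order)] at h
          norm_num at h
        · by_contra hne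
          rw [if_neg hne] at h
          norm_num at h
      subst ha
      exact Or.inl (Or.inl (Or.inl rfl))

lemma legB_subset {i0 i : Fin n} (hi : i0 < i) : legB n i0 i ⊆ posB n := by
  rintro v (((rfl | ⟨s, hs, rfl⟩) | ⟨s, hs, rfl⟩) | ⟨s, hs, hsi, rfl⟩)
  · exact Or.inr ⟨i0, rfl⟩
  · exact Or.inl ⟨i0, s, hi.trans hs, Or.inr rfl⟩
  · exact Or.inl ⟨i0, s, hi.trans hs, Or.inl rfl⟩
  · exact Or.inl ⟨s, i, hsi, Or.inr rfl⟩

lemma leg_spec {i0 i : Fin n} (hi : i0 < i) {v : Fin n → ℝ} (hv : v ∈ legB n i0 i) :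
    indLT i ⬝ᵥ v = 1 ∧ (v i0 = 0 ∨ v i = 0) := by
  rcases hv with (((rfl | ⟨s, hs, rfl⟩) | ⟨s, hs, rfl⟩) | ⟨s, hs, hsi, rfl⟩)
  · simp [dot_eB, indLT, eB_apply, hi, hi.ne']
  · simp [dotProduct_add, dot_eB, indLT, eB_apply, hi, hi.ne', hs.le, hs.ne]
  · simp [dotProduct_sub, dot_eB, indLT, eB_apply, hi, hi.ne', hs.le, hs.ne]
  · simp [dotProduct_add, dot_eB, indLT, eB_apply, hi.ne, hs.ne, hsi]

/-- The condition describing `ℓ(α) ∪ {α} ∪ k(α)`: it bounds partial coordinate sums from below,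
and these sums are nonnegative on positive roots. -/
def Upper (i0 i : Fin n) (v : Fin n → ℝ) : Prop :=
  (1 ≤ indLE i0 ⬝ᵥ v ∧ 1 ≤ indLE i ⬝ᵥ v) ∨ 2 ≤ indLE i ⬝ᵥ v

lemma Upper.add {i0 i : Fin n} {u v : Fin n → ℝ} (hu : u ∈ posB n) (hv : Upper i0 i v) :
    Upper i0 i (u + v) := by
  have h1 := indLE_nonneg i0 hu
  have h2 := indLE_nonneg i hu
  rw [Upper, dotProduct_add, dotProduct_add]
  rcases hv with ⟨h3, h4⟩ | h3
  · exact Or.inl ⟨by linarith, by linarith⟩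
  · exact Or.inr (by linarith)

lemma upper_of_mem {i0 i : Fin n} (hi : i0 < i) {v : Fin n → ℝ}
    (hv : v ∈ legB n i0 i ∪ {eB n i0 + eB n i}) : Upper i0 i v := by
  rcases hv with (((rfl | ⟨s, hs, rfl⟩) | ⟨s, hs, rfl⟩) | ⟨s, hs, hsi, rfl⟩) | rfl
  · left; simp [dot_eB, indLE, hi.le]
  · left; simp [dotProduct_add, dot_eB, indLE, hi.le, hs.not_ge, (hi.trans hs).not_ge]
  · left; simp [dotProduct_sub, dot_eB, indLE, hi.le, hs.not_ge, (hi.trans hs).not_ge]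
  · right; simp [dotProduct_add, dot_eB, indLE, hsi.le]; norm_num
  · right; simp [dotProduct_add, dot_eB, indLE, hi.le]; norm_num

lemma mem_of_upper {i0 i : Fin n} (h0 : ∀ t, i0 ≤ t) (hi : i0 < i) {v : Fin n → ℝ}
    (hv : v ∈ posB n) (h : Upper i0 i v) :
    v ∈ legB n i0 i ∪ {eB n i0 + eB n i} ∪ kSet (posB n) (eB n i0 + eB n i) := by
  by_cases hQ : 2 ≤ indLT i ⬝ᵥ v
  · exact Or.inr (mem_kSet_of_two_le hi hv hQ)
  · left
    rcases hv with ⟨a, b, hab, rfl | rfl⟩ | ⟨a, rfl⟩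
    · left
      have hb0 : ¬ b ≤ i0 := by have := h0 a; order
      simp only [Upper, dotProduct_sub, dot_eB, indLE, if_neg hb0] at h
      rcases h with ⟨h1, h2⟩ | h1
      · have ha : a ≤ i0 := by
          by_contra hne
          rw [if_neg hne] at h1
          norm_num at h1
        obtain rfl : a = i0 := le_antisymm ha (h0 a)
        have hb : ¬ b ≤ i := fun hb => by
          rw [if_pos hb, if_pos hi.le] at h2
          norm_num at h2
        exact Or.inl (Or.inr ⟨b, not_le.1 hb, rfl⟩)
      · split_ifs at h1 <;> norm_num at h1
    · have hbi : i ≤ b := by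
        by_contra hlt
        rw [not_le] at hlt
        apply hQ
        simp only [dotProduct_add, dot_eB, indLT, if_pos hlt, if_pos (hab.trans hlt)]
        norm_num
      have hb0 : ¬ b ≤ i0 := by order
      simp only [Upper, dotProduct_add, dot_eB, indLE, if_neg hb0] at h
      rcases hbi.eq_or_lt with rfl | hlt
      · rcases (h0 a).eq_or_lt with rfl | ha
        · exact Or.inr rfl
        · exact Or.inl (Or.inr ⟨a, ha, hab, rfl⟩)
      · have ha : a ≤ i0 := by
          by_contra hne
          rw [if_neg hne, if_neg hlt.not_ge] at h
          rcases h with ⟨h1, -⟩ | h1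
          · norm_num at h1
          · split_ifs at h1 <;> norm_num at h1
        obtain rfl : a = i0 := le_antisymm ha (h0 a)
        exact Or.inl (Or.inl (Or.inl (Or.inr ⟨b, hlt, rfl⟩)))
    · simp only [Upper, dot_eB, indLE] at h
      have ha : a ≤ i0 := by
        by_contra hne
        rw [if_neg hne] at h
        rcases h with ⟨h1, -⟩ | h1
        · norm_num at h1
        · split_ifs at h1 <;> norm_num at h1
      obtain rfl : a = i0 := le_antisymm ha (h0 a)
      exact Or.inl (Or.inl (Or.inl (Or.inl rfl)))

/-- Every element of the arm is completed to `α` by an element of the leg. -/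
lemma exists_leg_partner {i0 i : Fin n} {v : Fin n → ℝ}
    (hv : v ∈ armB n i0 i) : ∃ u ∈ legB n i0 i, u + v = eB n i0 + eB n i := by
  rcases hv with (((rfl | ⟨s, hs, rfl⟩) | ⟨s, hs, rfl⟩) | ⟨s, hs, hsi, rfl⟩)
  · exact ⟨_, Or.inl (Or.inl (Or.inl rfl)), rfl⟩
  · exact ⟨_, Or.inl (Or.inr ⟨s, hs, rfl⟩), by abel⟩
  · exact ⟨_, Or.inl (Or.inl (Or.inr ⟨s, hs, rfl⟩)), by abel⟩
  · exact ⟨_, Or.inr ⟨s, hs, hsi, rfl⟩, by abel⟩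

end TypeB

/-- type `B_n`.  For `α = e_1 + e_i` (with `e_1 = e i₀`
the first coordinate vector and `1 < i`):
(a) the source `s(α)` is a closed pattern;
(b) `ℓ(α) ∪ k(α)` is normal in `s(α)`;
(c) `ℓ(α) ∪ {α} ∪ k(α)` is a normal pattern in `Φ⁺`. -/
theorem typeB_source
    (n : ℕ) (hn : 2 ≤ n) (i0 i : Fin n) (h0 : (i0 : ℕ) = 0) (hi : i0 < i) :
    ClosedIn (posB n) (srcB n i0 i) ∧
    (legB n i0 i ∪ kSet (posB n) (eB n i0 + eB n i) ⊆ srcB n i0 i ∧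
      NormalIn (posB n) (srcB n i0 i)
        (legB n i0 i ∪ kSet (posB n) (eB n i0 + eB n i))) ∧
    NormalPattern (posB n)
      (legB n i0 i ∪ {eB n i0 + eB n i} ∪ kSet (posB n) (eB n i0 + eB n i)) := by
  have hmin : ∀ t, i0 ≤ t := fun t => Fin.le_def.2 (by omega)
  have hα : eB n i0 + eB n i ∈ posB n := Or.inl ⟨i0, i, hi, Or.inr rfl⟩
  have hαk : eB n i0 + eB n i ∉ kSet (posB n) (eB n i0 + eB n i) :=
    self_notMem_kSet (fun v => htW n ⬝ᵥ v) (fun x y => dotProduct_add _ x y) fun _ => htW_pos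
  have hC : NormalPattern (posB n)
      (legB n i0 i ∪ {eB n i0 + eB n i} ∪ kSet (posB n) (eB n i0 + eB n i)) := by
    refine ⟨?_, fun a ha b hb hab => ?_⟩
    · rintro v ((hv | rfl) | hv)
      exacts [legB_subset hi hv, hα, kSet_subset hv]
    · rcases hb with hb | hb
      · exact mem_of_upper hmin hi hab ((upper_of_mem hi hb).add ha)
      · exact Or.inr (kSet_normal a ha b hb hab)
  refine ⟨?_, ⟨?_, ?_⟩, hC⟩
  · rintro a ⟨ha, haA⟩ b ⟨hb, hbA⟩ hab
    refine ⟨hab, fun hA => ?_⟩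
    rw [mem_armB_iff hi ha] at haA
    rw [mem_armB_iff hi hb] at hbA
    rw [mem_armB_iff hi hab, dotProduct_add, Pi.add_apply, Pi.add_apply] at hA
    obtain ⟨hQ, h⟩ := hA
    have ha0 := indLT_nonneg i ha
    have hb0 := indLT_nonneg i hb
    have hQa : indLT i ⬝ᵥ a = 0 := by linarith
    have hQb : indLT i ⬝ᵥ b = 0 := by linarith
    -- Coordinates of roots are integers, so a coordinate below `1` is at most `0`.
    have hint : ∀ v ∈ posB n, ∀ t, 1 ≤ v t ∨ v t ≤ 0 := by
      rintro v (⟨p, q, hpq, rfl | rfl⟩ | ⟨p, rfl⟩) t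
      all_goals
        simp only [Pi.sub_apply, Pi.add_apply, eB_apply]
        split_ifs <;> norm_num
    rcases h with h | h
    · rcases hint a ha i0 with h1 | h1
      · exact haA ⟨hQa, Or.inl h1⟩
      · exact hbA ⟨hQb, Or.inl (by linarith)⟩
    · rcases hint a ha i with h1 | h1
      · exact haA ⟨hQa, Or.inr h1⟩
      · exact hbA ⟨hQb, Or.inr (by linarith)⟩
  · rintro v (hv | hv)
    · refine ⟨legB_subset hi hv, fun hA => ?_⟩
      have h1 := ((mem_armB_iff hi (legB_subset hi hv)).1 hA).1
      rw [(leg_spec hi hv).1] at h1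
      norm_num at h1
    · refine ⟨kSet_subset hv, fun hA => hαk ?_⟩
      obtain ⟨u, hu, huv⟩ := exists_leg_partner hA
      have h1 := kSet_normal u (legB_subset hi hu) v hv (huv ▸ hα)
      rwa [huv] at h1
  · rintro a ⟨ha, haA⟩ b hb hab
    have hne : a + b ≠ eB n i0 + eB n i := by
      intro he
      rcases hb with hb | hb
      · refine haA ((mem_armB_iff hi ha).2 ?_)
        obtain ⟨h1, h2⟩ := leg_spec hi hb
        have hQ : indLT i ⬝ᵥ (a + b) = 1 := by
          rw [he]
          simp [dotProduct_add, dot_eB, indLT, hi]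
        have hx := congrFun he i0
        have hy := congrFun he i
        rw [dotProduct_add] at hQ
        simp only [Pi.add_apply, eB_apply, if_true, if_neg hi.ne, if_neg hi.ne'] at hx hy
        refine ⟨by linarith, ?_⟩
        rcases h2 with h2 | h2
        · left; linarith
        · right; linarith
      · have h1 := kSet_normal a ha b hb hab
        rw [he] at h1
        exact hαk h1
    have hb' : b ∈ legB n i0 i ∪ {eB n i0 + eB n i} ∪ kSet (posB n) (eB n i0 + eB n i) :=
      hb.imp Or.inl id
    rcases hC.2 a ha b hb' hab with (h | h) | h
    exacts [Or.inl h, absurd h hne, Or.inr h]
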